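/- Let μ_n be probability measures on Ξ_n with limsup_{n→∞} n·ℐ_n(μ_n) < ∞. Then lim_{ε→0} limsup_{n→∞} n·Σ_{z∈𝒫} Σ_{x∈Q^n_ε(z)} μ_n(x)·|x − z|³ = 0, where 𝒫 denotes the set of critical points of F and |x − z| the torus distance. -/

import Mathlib

/-!
The rates satisfy `π_n(x) R_n(x,y) = √(π_n(x) π_n(y))`, so expanding the square in `ℐ_n(μ)` and
using `2 √(μ(x) μ(y)) ≤ μ(x) + μ(y)` gives (`IT_lower`)
`ℐ_n(μ) ≥ ∑_x μ(x) ∑_{y ∼ x} (R_n(x,y) - 1)`.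
Adding the two directions `± e_i` and using a second-order Taylor bound on `F`, the inner sum is at
least `c |∇F(x)|² - C / n` (`site_lower`): the first-order terms combine into a hyperbolic cosine.
Hence `n ∑ μ_n |∇F|²` stays bounded as soon as `n ℐ_n(μ_n)` does (`scaled_gradSq_le`).

At a nondegenerate critical point `z` the gradient grows at least linearly, `|x - z| ≤ C |∇F(x)|`
for `x` near `z`, so on the cube of side `ε` one has `|x - z|³ ≤ K ε |∇F(x)|²` (`cube_bound`).
The quantity in the theorem is therefore `O(ε)`, uniformly in large `n`.
-/

open Filter MeasureTheory
open scoped ENNReal Classical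

noncomputable section

/-- Discretization of the torus `𝕋^d = ℝ^d/ℤ^d`: the points `k/n`, `k ∈ {0,…,n-1}^d`,
taken as representatives in the fundamental domain `[0,1)^d`. -/
def XiT (d n : ℕ) : Finset (Fin d → ℝ) :=
  (Finset.univ : Finset (Fin d → Fin n)).image fun k i => (k i : ℝ) / n

/-- `x` and `y` are nearest neighbours of the discretized torus: `y - x ≡ ±eᵢ/n mod ℤ^d`. -/
def NbrT (d n : ℕ) (x y : Fin d → ℝ) : Prop :=
  ∃ i : Fin d, ∃ s : ℝ, (s = 1 ∨ s = -1) ∧ ∃ v : Fin d → ℤ,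
    ∀ j, y j = x j + (if j = i then s / n else 0) + (v j : ℝ)

/-- Partition function `Z_{F,n}`. -/
def ZT (d : ℕ) (F : (Fin d → ℝ) → ℝ) (n : ℕ) : ℝ :=
  ∑ x ∈ XiT d n, Real.exp (-(n : ℝ) * F x)

/-- Stationary measure `π_n(x) = e^{-nF(x)}/Z_{F,n}`. -/
def piT (d : ℕ) (F : (Fin d → ℝ) → ℝ) (n : ℕ) (x : Fin d → ℝ) : ℝ :=
  Real.exp (-(n : ℝ) * F x) / ZT d F n

/-- Jump rates `R_n(x,y) = e^{-(n/2)(F(y)-F(x))}` for nearest neighbours, `0` otherwise. -/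
def RT (d : ℕ) (F : (Fin d → ℝ) → ℝ) (n : ℕ) (x y : Fin d → ℝ) : ℝ :=
  if NbrT d n x y then Real.exp (-((n : ℝ) / 2) * (F y - F x)) else 0

/-- Level-two large deviations rate functional `ℐ_n`. -/
def IT (d : ℕ) (F : (Fin d → ℝ) → ℝ) (n : ℕ) (μ : (Fin d → ℝ) → ℝ) : ℝ :=
  (1 / 2) * ∑ x ∈ XiT d n, ∑ y ∈ (XiT d n).erase x,
    piT d F n x * RT d F n x y *
      (Real.sqrt (μ y / piT d F n y) - Real.sqrt (μ x / piT d F n x)) ^ 2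

/-- The function `G(x) = Σᵢ 2(cosh(∂ᵢF(x)/2) - 1)`. -/
def GT (d : ℕ) (F : (Fin d → ℝ) → ℝ) (x : Fin d → ℝ) : ℝ :=
  ∑ i : Fin d, 2 * (Real.cosh (fderiv ℝ F x (Pi.single i 1) / 2) - 1)

/-- A function on `ℝ^d` is `ℤ^d`-periodic, i.e. well defined on the torus. -/
def PerT (d : ℕ) (g : (Fin d → ℝ) → ℝ) : Prop :=
  ∀ (x : Fin d → ℝ) (v : Fin d → ℤ), g (fun i => x i + (v i : ℝ)) = g x

/-- The (Euclidean) torus distance. -/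
def tdistT (d : ℕ) (x y : Fin d → ℝ) : ℝ :=
  ⨅ v : Fin d → ℤ, Real.sqrt (∑ i, (x i - y i - (v i : ℝ)) ^ 2)

/-- Membership in the (torus) cube of side `ε` centered at `z`. -/
def InCubeT (d : ℕ) (ε : ℝ) (z x : Fin d → ℝ) : Prop :=
  ∃ v : Fin d → ℤ, ∀ i, |x i - z i - (v i : ℝ)| ≤ ε / 2

/-- The discretized cube `Q^n_ε(z) = Q_ε(z) ∩ Ξ_n`. -/
def QT (d : ℕ) (ε : ℝ) (z : Fin d → ℝ) (n : ℕ) : Finset (Fin d → ℝ) :=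
  (XiT d n).filter (InCubeT d ε z)

/-- The Hessian matrix of `F` at `x`. -/
def HessT (d : ℕ) (F : (Fin d → ℝ) → ℝ) (x : Fin d → ℝ) : Matrix (Fin d) (Fin d) ℝ :=
  Matrix.of fun i j => fderiv ℝ (fun y => fderiv ℝ F y (Pi.single j 1)) x (Pi.single i 1)

/-! ### Analytic estimates -/

lemma one_add_sq_half_le_cosh (t : ℝ) : 1 + t ^ 2 / 2 ≤ Real.cosh t := by
  have h1 : Real.cosh t = 1 + 2 * Real.sinh (t / 2) ^ 2 := by
    have := Real.cosh_two_mul (t / 2)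
    rw [Real.cosh_sq] at this
    rw [show t = 2 * (t / 2) by ring, this]; ring_nf
  have h2 : (t / 2) ^ 2 ≤ Real.sinh (t / 2) ^ 2 := by
    rw [sq_le_sq, Real.abs_sinh]
    exact Real.self_le_sinh_iff.2 (abs_nonneg _)
  rw [h1]; nlinarith

/-- Writing `s = (a + b) / 2` and `t = (a - b) / 2`, one has `e^a + e^b = 2 e^s cosh t`. The
hypotheses say that `a` and `b` are close to `∓ u / 2`, so that `s` is close to `0` and `t` to
`- u / 2`. -/
lemma exp_pair_lower {a b u δ : ℝ} (hδ : 0 ≤ δ) (ha : |a + u / 2| ≤ δ) (hb : |b - u / 2| ≤ δ) :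
    Real.exp (-δ) * u ^ 2 / 8 - 2 * δ - δ ^ 2 ≤ (Real.exp a - 1) + (Real.exp b - 1) := by
  rw [abs_le] at ha hb
  set s := (a + b) / 2 with hs
  set t := (a - b) / 2 with ht
  have hab : Real.exp a + Real.exp b = 2 * (Real.exp s * Real.cosh t) := by
    rw [Real.cosh_eq]
    have h1 : Real.exp a = Real.exp s * Real.exp t := by rw [← Real.exp_add]; congr 1; simp [hs, ht]; ring
    have h2 : Real.exp b = Real.exp s * Real.exp (-t) := by
      rw [← Real.exp_add]; congr 1; simp [hs, ht]; ring
    rw [h1, h2]; ring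
  have hc := one_add_sq_half_le_cosh t
  have he : s + 1 ≤ Real.exp s := Real.add_one_le_exp s
  have hs' : -δ ≤ s := by simp only [hs]; linarith
  have hed : Real.exp (-δ) ≤ Real.exp s := Real.exp_le_exp.2 hs'
  have hed1 : Real.exp (-δ) ≤ 1 := Real.exp_le_one_iff.2 (by linarith)
  have hpos : 0 < Real.exp (-δ) := Real.exp_pos _
  have htu : u ^ 2 / 8 - δ ^ 2 ≤ t ^ 2 := by
    have h1 : |t + u / 2| ≤ δ := by rw [abs_le]; constructor <;> simp only [ht] <;> linarith
    have h2 : (t + u / 2) ^ 2 ≤ δ ^ 2 := by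
      rw [← sq_abs]; exact pow_le_pow_left₀ (abs_nonneg _) h1 2
    nlinarith [sq_nonneg (t + u / 4), sq_nonneg (2 * t + u / 2)]
  have h3 : Real.exp s * (1 + t ^ 2 / 2) ≤ Real.exp s * Real.cosh t :=
    mul_le_mul_of_nonneg_left hc (Real.exp_pos _).le
  have h4 : Real.exp (-δ) * t ^ 2 ≤ Real.exp s * t ^ 2 := mul_le_mul_of_nonneg_right hed (sq_nonneg _)
  have h5 : Real.exp (-δ) * (u ^ 2 / 8 - δ ^ 2) ≤ Real.exp (-δ) * t ^ 2 :=
    mul_le_mul_of_nonneg_left htu hpos.le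
  have h6 : Real.exp (-δ) * δ ^ 2 ≤ 1 * δ ^ 2 := mul_le_mul_of_nonneg_right hed1 (sq_nonneg _)
  linarith

/-- First-order Taylor expansion with quadratic remainder, uniform over the unit ball, which
contains the fundamental domain `[0,1)^d` (`‖·‖` is the sup norm). -/
lemma exists_taylor_bound {d : ℕ} {F : (Fin d → ℝ) → ℝ} (hF : ContDiff ℝ 2 F) :
    ∃ M : ℝ, 0 ≤ M ∧ ∀ x : Fin d → ℝ, ‖x‖ ≤ 1 → ∀ w : Fin d → ℝ, ‖w‖ ≤ 1 →
      |F (x + w) - F x - fderiv ℝ F x w| ≤ M * ‖w‖ ^ 2 := by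
  have hF1 : ContDiff ℝ 1 (fderiv ℝ F) := hF.fderiv_right (by norm_num)
  have hcont : Continuous (fderiv ℝ (fderiv ℝ F)) := hF1.continuous_fderiv (by norm_num)
  obtain ⟨M, hM⟩ := (isCompact_closedBall (0 : Fin d → ℝ) 2).exists_bound_of_continuousOn
    (f := fderiv ℝ (fderiv ℝ F)) hcont.continuousOn
  have hM0 : 0 ≤ M := (norm_nonneg _).trans (hM 0 (by simp))
  refine ⟨M, hM0, fun x hx w hw => ?_⟩
  have hxm : x ∈ Metric.closedBall (0 : Fin d → ℝ) 2 := by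
    simp only [mem_closedBall_zero_iff]; linarith
  have hxw : x + w ∈ Metric.closedBall (0 : Fin d → ℝ) 2 := by
    simp only [mem_closedBall_zero_iff]; linarith [norm_add_le x w]
  have hseg : segment ℝ x (x + w) ⊆ Metric.closedBall (0 : Fin d → ℝ) 2 :=
    (convex_closedBall _ _).segment_subset hxm hxw
  have hb : ∀ y ∈ segment ℝ x (x + w), ‖fderiv ℝ F y - fderiv ℝ F x‖ ≤ M * ‖w‖ := by
    intro y hy
    have h1 := (convex_closedBall (0 : Fin d → ℝ) 2).norm_image_sub_le_of_norm_fderiv_le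
      (f := fderiv ℝ F) (𝕜 := ℝ) (fun z _ => (hF1.differentiable (by norm_num)) z) hM hxm (hseg hy)
    refine h1.trans (mul_le_mul_of_nonneg_left ?_ hM0)
    have := norm_sub_le_of_mem_segment hy
    simpa using this
  have h2 := (convex_segment x (x + w)).norm_image_sub_le_of_norm_fderiv_le' (f := F) (𝕜 := ℝ)
    (fun z _ => (hF.differentiable (by norm_num)) z) hb (left_mem_segment _ _ _)
    (right_mem_segment _ _ _)
  rw [add_sub_cancel_left, Real.norm_eq_abs] at h2
  linarith [h2, show M * ‖w‖ * ‖w‖ = M * ‖w‖ ^ 2 by ring]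

/-- A nondegenerate Hessian is antilipschitz as a linear map, hence the gradient grows at least
linearly away from a nondegenerate critical point. -/
lemma gradient_lower {d : ℕ} {F : (Fin d → ℝ) → ℝ} (hF : ContDiff ℝ 2 F)
    {z : Fin d → ℝ} (hz : fderiv ℝ F z = 0) (hdet : (HessT d F z).det ≠ 0) :
    ∃ C : ℝ, 0 ≤ C ∧ ∃ r : ℝ, 0 < r ∧ ∀ w : Fin d → ℝ, ‖w‖ ≤ r →
      ‖w‖ ≤ C * ‖fun i => fderiv ℝ F (z + w) (Pi.single i 1)‖ := by
  have hF1 : ContDiff ℝ 1 (fderiv ℝ F) := hF.fderiv_right (by norm_num)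
  have hdj : ∀ j, DifferentiableAt ℝ (fun y => fderiv ℝ F y (Pi.single j 1)) z := fun j =>
    ((hF1.clm_apply contDiff_const).differentiable (by norm_num)) z
  set G : (Fin d → ℝ) →L[ℝ] (Fin d → ℝ) :=
    ContinuousLinearMap.pi fun j => fderiv ℝ (fun y => fderiv ℝ F y (Pi.single j 1)) z with hG
  have hder : HasFDerivAt (fun y => fun j => fderiv ℝ F y (Pi.single j 1)) G z :=
    hasFDerivAt_pi.2 fun j => (hdj j).hasFDerivAt
  have hGv : ∀ w, G w = Matrix.vecMul w (HessT d F z) := by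
    intro w
    ext j
    simp only [hG, ContinuousLinearMap.coe_pi', Matrix.vecMul, dotProduct, HessT, Matrix.of_apply]
    conv_lhs => rw [pi_eq_sum_univ' w]
    rw [map_sum]
    simp
  have hker : LinearMap.ker (G : (Fin d → ℝ) →ₗ[ℝ] (Fin d → ℝ)) = ⊥ := by
    rw [LinearMap.ker_eq_bot']
    intro w hw
    exact Matrix.eq_zero_of_vecMul_eq_zero hdet ((hGv w).symm.trans hw)
  obtain ⟨K, -, hK⟩ := LinearMap.exists_antilipschitzWith _ hker
  have hO := hder.isTheta_sub (hK.isInducing G.continuous) |>.isBigO_symm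
  obtain ⟨C, hC0, hC⟩ := hO.exists_nonneg
  rw [Asymptotics.isBigOWith_iff] at hC
  obtain ⟨r, hr, hball⟩ := Metric.eventually_nhds_iff.1 hC
  refine ⟨C, hC0, r / 2, by positivity, fun w hw => ?_⟩
  have := @hball (z + w) (by simp [dist_eq_norm]; linarith)
  simpa [hz, Pi.sub_def] using this

/-! ### Neighbours in the discretized torus -/

lemma mem_XiT_coord {d n : ℕ} {x : Fin d → ℝ} (hx : x ∈ XiT d n) (i : Fin d) :
    ∃ m : ℤ, x i = m / n ∧ 0 ≤ x i ∧ x i < 1 := by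
  obtain ⟨k, -, rfl⟩ := Finset.mem_image.1 hx
  have hk := (k i).isLt
  have hn : (0 : ℝ) < n := by exact_mod_cast (Nat.zero_le _).trans_lt hk
  refine ⟨(k i : ℕ), by simp, by positivity, ?_⟩
  rw [div_lt_one hn]
  exact_mod_cast hk

lemma fract_mem_XiT {d n : ℕ} (hn : 0 < n) {x : Fin d → ℝ} (hx : ∀ i, ∃ m : ℤ, x i = m / n) :
    (fun i => Int.fract (x i)) ∈ XiT d n := by
  choose m hm using hx
  have hn' : (0 : ℤ) < n := by exact_mod_cast hn
  refine Finset.mem_image.2 ⟨fun i => ⟨(m i % n).toNat, ?_⟩, Finset.mem_univ _, ?_⟩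
  · have := Int.emod_lt_of_pos (m i) hn'
    have := Int.emod_nonneg (m i) hn'.ne'
    omega
  · ext i
    rw [hm i, Int.fract_div_intCast_eq_div_intCast_mod]
    have h : ((m i % n).toNat : ℤ) = m i % n := Int.toNat_of_nonneg (Int.emod_nonneg _ hn'.ne')
    simp only
    congr 1
    exact_mod_cast h

/-- The increment `± e_i / n`, where `p = (i, sign)` and `true` stands for `+`. -/
def stepT (d n : ℕ) (p : Fin d × Bool) : Fin d → ℝ :=
  Pi.single p.1 ((if p.2 then 1 else -1) / n)

/-- The neighbour `x ± e_i / n` of `x`, brought back to the fundamental domain `[0,1)^d`. -/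
def shiftT (d n : ℕ) (x : Fin d → ℝ) (p : Fin d × Bool) : Fin d → ℝ :=
  fun j => Int.fract (x j + stepT d n p j)

lemma int_eq_zero_of_div {n : ℕ} {a : ℝ} (hn : 0 < n) (ha : |a| < n) (z : ℤ)
    (h : a / n = z) : a = 0 := by
  have hn' : (0 : ℝ) < n := by exact_mod_cast hn
  have h1 : |(z : ℝ)| < 1 := by
    rw [← h, abs_div, abs_of_pos hn', div_lt_one hn']; exact ha
  have h2 : z = 0 := Int.abs_lt_one_iff.1 (by exact_mod_cast h1)
  rw [h2, div_eq_iff hn'.ne'] at h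
  simpa using h

/-- For `n ≥ 3` the `2d` points `x ± e_i / n` of the torus are distinct and different from `x`,
so they enumerate the neighbours of `x` without repetition. -/
lemma sum_neighbours {d n : ℕ} (hn : 3 ≤ n) {x : Fin d → ℝ} (hx : x ∈ XiT d n)
    (h : (Fin d → ℝ) → ℝ) :
    ∑ y ∈ (XiT d n).erase x, (if NbrT d n x y then h y else 0) =
      ∑ i, (h (shiftT d n x (i, true)) + h (shiftT d n x (i, false))) := by
  have hn0 : 0 < n := by omega
  have hn3 : (3 : ℝ) ≤ n := by exact_mod_cast hn
  have hnR : (0 : ℝ) < n := by linarith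
  have hs : ∀ b : Bool, ∃ t : ℤ, (t = 1 ∨ t = -1) ∧ (if b then (1 : ℝ) else -1) = t := by
    intro b
    cases b
    · exact ⟨-1, by simp⟩
    · exact ⟨1, by simp⟩
  have habs : ∀ b : Bool, |(if b then (1 : ℝ) else -1)| = 1 := by intro b; cases b <;> simp
  have hne : ∀ b : Bool, (if b then (1 : ℝ) else -1) ≠ 0 := by intro b; cases b <;> simp
  have hfx : ∀ j, Int.fract (x j) = x j := fun j => by
    obtain ⟨m, -, h0, h1⟩ := mem_XiT_coord hx j
    exact Int.fract_eq_self.2 ⟨h0, h1⟩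
  rw [← Finset.sum_filter]
  have hR : ∑ i, (h (shiftT d n x (i, true)) + h (shiftT d n x (i, false))) =
      ∑ p : Fin d × Bool, h (shiftT d n x p) := by
    rw [Fintype.sum_prod_type]
    simp
  rw [hR]
  symm
  refine Finset.sum_nbij (shiftT d n x) ?_ ?_ ?_ (fun _ _ => rfl)
  · rintro ⟨i, b⟩ -
    rw [Finset.mem_filter, Finset.mem_erase]
    refine ⟨⟨?_, ?_⟩, ?_⟩
    · intro he
      have h1 := congrFun he i
      rw [shiftT, ← hfx i, Int.fract_eq_fract] at h1
      obtain ⟨z, hz⟩ := h1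
      simp only [hfx, stepT, Pi.single_eq_same, add_sub_cancel_left] at hz
      exact hne b (int_eq_zero_of_div hn0 (by rw [habs]; linarith) z hz)
    · apply fract_mem_XiT (x := fun j => x j + stepT d n (i, b) j) hn0
      intro j
      obtain ⟨m, hm, -⟩ := mem_XiT_coord hx j
      obtain ⟨t, -, ht⟩ := hs b
      by_cases hj : j = i
      · subst hj
        refine ⟨m + t, ?_⟩
        simp only [stepT, Pi.single_eq_same]
        rw [hm, ht]; push_cast; ring
      · exact ⟨m, by simp [stepT, hj, hm]⟩
    · refine ⟨i, if b then 1 else -1, by cases b <;> simp,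
        fun j => -⌊x j + stepT d n (i, b) j⌋, fun j => ?_⟩
      simp only [shiftT, Int.fract, stepT, Pi.single_apply]
      push_cast; ring
  · rintro ⟨i, b⟩ - ⟨i', b'⟩ - he
    have hj : ∀ j, ∃ z : ℤ, stepT d n (i, b) j - stepT d n (i', b') j = z := by
      intro j
      obtain ⟨z, hz⟩ := Int.fract_eq_fract.1 (congrFun he j)
      exact ⟨z, by rw [← hz]; ring⟩
    obtain ⟨z, hz⟩ := hj i
    by_cases hii : i = i'
    · subst hii
      simp only [stepT, Pi.single_eq_same, ← sub_div] at hz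
      have h0 := int_eq_zero_of_div hn0 (lt_of_le_of_lt (abs_sub _ _)
        (by rw [habs, habs]; linarith)) z hz
      cases b <;> cases b' <;> first | rfl | norm_num at h0
    · simp only [stepT, Pi.single_eq_same, Pi.single_eq_of_ne hii, sub_zero] at hz
      exact absurd (int_eq_zero_of_div hn0 (by rw [habs]; linarith) z hz) (hne b)
  · intro y hy
    rw [Finset.mem_coe, Finset.mem_filter, Finset.mem_erase] at hy
    obtain ⟨⟨-, hyX⟩, i, s, hs1, v, hv⟩ := hy
    have hb : ∃ b : Bool, (if b then (1 : ℝ) else -1) = s := by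
      rcases hs1 with rfl | rfl
      · exact ⟨true, by simp⟩
      · exact ⟨false, by simp⟩
    obtain ⟨b, hb⟩ := hb
    refine ⟨(i, b), by simp, ?_⟩
    ext j
    obtain ⟨m, -, h0, h1⟩ := mem_XiT_coord hyX j
    rw [← Int.fract_eq_self.2 ⟨h0, h1⟩, hv j, Int.fract_add_intCast]
    simp [shiftT, stepT, Pi.single_apply, hb]

lemma NbrT_symm {d n : ℕ} {x y : Fin d → ℝ} (h : NbrT d n x y) : NbrT d n y x := by
  obtain ⟨i, s, hs, v, hv⟩ := h
  refine ⟨i, -s, ?_, fun j => -v j, fun j => ?_⟩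
  · rcases hs with rfl | rfl <;> simp
  · rw [hv j]; push_cast; split_ifs <;> ring

/-! ### Lower bound for the rate functional -/

lemma pair_lower {a b u v Z : ℝ} (hZ : 0 < Z) :
    b ^ 2 * (u * v / Z - v ^ 2 / Z) + a ^ 2 * (u * v / Z - u ^ 2 / Z) ≤
      u * v / Z * (b - a) ^ 2 := by
  have h : u * v / Z * (b - a) ^ 2 - (b ^ 2 * (u * v / Z - v ^ 2 / Z) +
      a ^ 2 * (u * v / Z - u ^ 2 / Z)) = (b * v - a * u) ^ 2 / Z := by
    field_simp; ring
  have : 0 ≤ (b * v - a * u) ^ 2 / Z := by positivity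
  linarith

lemma ZT_pos {d n : ℕ} (F : (Fin d → ℝ) → ℝ) {x : Fin d → ℝ} (hx : x ∈ XiT d n) :
    0 < ZT d F n :=
  Finset.sum_pos (fun _ _ => Real.exp_pos _) ⟨x, hx⟩

/-- With `q = π(x) R(x,y) = √(π(x) π(y))`, expanding the square produces
`-2 q √(μ(x)/π(x)) √(μ(y)/π(y))`, which equals `-2 √(μ(x) μ(y)) ≥ -μ(x) - μ(y)`. -/
lemma rate_pair_lower {d n : ℕ} (F : (Fin d → ℝ) → ℝ) {μ : (Fin d → ℝ) → ℝ} {x y : Fin d → ℝ}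
    (hx : x ∈ XiT d n) (hμx : 0 ≤ μ x) (hμy : 0 ≤ μ y) :
    μ y * (Real.exp (-((n : ℝ) / 2) * (F x - F y)) - 1) +
      μ x * (Real.exp (-((n : ℝ) / 2) * (F y - F x)) - 1) ≤
    piT d F n x * Real.exp (-((n : ℝ) / 2) * (F y - F x)) *
      (Real.sqrt (μ y / piT d F n y) - Real.sqrt (μ x / piT d F n x)) ^ 2 := by
  have hZ := ZT_pos F hx
  have hpi : ∀ w, 0 < piT d F n w := fun w => div_pos (Real.exp_pos _) hZ
  set u := Real.exp (-((n : ℝ) / 2) * F x) with hu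
  set v := Real.exp (-((n : ℝ) / 2) * F y) with hv
  have hu0 : 0 < u := Real.exp_pos _
  have hv0 : 0 < v := Real.exp_pos _
  have hA : Real.exp (-((n : ℝ) / 2) * (F y - F x)) = v / u := by
    rw [hu, hv, ← Real.exp_sub]; congr 1; ring
  have hB : Real.exp (-((n : ℝ) / 2) * (F x - F y)) = u / v := by
    rw [hu, hv, ← Real.exp_sub]; congr 1; ring
  have hpx : piT d F n x = u ^ 2 / ZT d F n := by
    rw [piT, hu, ← Real.exp_nat_mul]; congr 2; push_cast; ring
  have hpy : piT d F n y = v ^ 2 / ZT d F n := by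
    rw [piT, hv, ← Real.exp_nat_mul]; congr 2; push_cast; ring
  have hx2 : μ x = Real.sqrt (μ x / piT d F n x) ^ 2 * (u ^ 2 / ZT d F n) := by
    rw [Real.sq_sqrt (div_nonneg hμx (hpi x).le), ← hpx, div_mul_cancel₀ _ (hpi x).ne']
  have hy2 : μ y = Real.sqrt (μ y / piT d F n y) ^ 2 * (v ^ 2 / ZT d F n) := by
    rw [Real.sq_sqrt (div_nonneg hμy (hpi y).le), ← hpy, div_mul_cancel₀ _ (hpi y).ne']
  have key := pair_lower (a := Real.sqrt (μ x / piT d F n x)) (b := Real.sqrt (μ y / piT d F n y))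
    (u := u) (v := v) hZ
  rw [hA, hB]
  generalize Real.sqrt (μ x / piT d F n x) = a at *
  generalize Real.sqrt (μ y / piT d F n y) = b at *
  rw [hx2, hy2, hpx]
  refine le_trans (le_of_eq ?_) (key.trans (le_of_eq ?_))
  · field_simp
  · field_simp

/-- Lower bound for `ℐ_n(μ)` by the `μ`-average of `∑_y (R_n(x,y) - 1)`, the sum running over the
neighbours `y` of `x`. -/
lemma IT_lower {d n : ℕ} (hn : 3 ≤ n) (F : (Fin d → ℝ) → ℝ) {μ : (Fin d → ℝ) → ℝ}
    (hμ : ∀ x ∈ XiT d n, 0 ≤ μ x) :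
    ∑ x ∈ XiT d n, μ x * ∑ i,
      ((Real.exp (-((n : ℝ) / 2) * (F (shiftT d n x (i, true)) - F x)) - 1) +
       (Real.exp (-((n : ℝ) / 2) * (F (shiftT d n x (i, false)) - F x)) - 1)) ≤ IT d F n μ := by
  set f : (Fin d → ℝ) → (Fin d → ℝ) → ℝ := fun x y =>
    if y ≠ x then (if NbrT d n x y then
      μ x * (Real.exp (-((n : ℝ) / 2) * (F y - F x)) - 1) else 0) else 0 with hf
  have herase : ∀ (x : Fin d → ℝ) (g : (Fin d → ℝ) → ℝ), ∑ y ∈ (XiT d n).erase x, g y =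
      ∑ y ∈ XiT d n, if y ≠ x then g y else 0 := by
    intro x g
    rw [← Finset.sum_filter, Finset.filter_ne']
  have hL : ∑ x ∈ XiT d n, μ x * ∑ i,
      ((Real.exp (-((n : ℝ) / 2) * (F (shiftT d n x (i, true)) - F x)) - 1) +
       (Real.exp (-((n : ℝ) / 2) * (F (shiftT d n x (i, false)) - F x)) - 1)) =
      ∑ x ∈ XiT d n, ∑ y ∈ XiT d n, f x y := by
    refine Finset.sum_congr rfl fun x hx => ?_
    rw [← sum_neighbours hn hx (fun y => Real.exp (-((n : ℝ) / 2) * (F y - F x)) - 1),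
      Finset.mul_sum, herase]
    refine Finset.sum_congr rfl fun y _ => ?_
    simp only [hf, mul_ite, mul_zero]
  have hsymm : ∑ x ∈ XiT d n, ∑ y ∈ XiT d n, f x y =
      (1 / 2) * ∑ x ∈ XiT d n, ∑ y ∈ XiT d n, (f y x + f x y) := by
    simp only [Finset.sum_add_distrib]
    rw [Finset.sum_comm (f := fun x y => f y x)]
    ring
  rw [hL, hsymm, IT]
  refine mul_le_mul_of_nonneg_left (Finset.sum_le_sum fun x hx => ?_) (by norm_num)
  rw [herase]
  refine Finset.sum_le_sum fun y hy => ?_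
  by_cases hxy : y = x
  · simp [hf, hxy]
  by_cases hN : NbrT d n x y
  · have hN' := NbrT_symm hN
    simp only [hf, RT, ne_eq, hxy, Ne.symm hxy, not_false_eq_true, hN, hN', if_true]
    exact rate_pair_lower F hx (hμ x hx) (hμ y hy)
  · have hN' : ¬ NbrT d n y x := fun h => hN (NbrT_symm h)
    simp [hf, RT, hN, hN']

/-! ### The second moment of the gradient -/

/-- The squared Euclidean norm of the gradient of `F` at `x`. -/
def gradSq (d : ℕ) (F : (Fin d → ℝ) → ℝ) (x : Fin d → ℝ) : ℝ :=
  ∑ i, fderiv ℝ F x (Pi.single i 1) ^ 2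

lemma gradSq_nonneg {d : ℕ} (F : (Fin d → ℝ) → ℝ) (x : Fin d → ℝ) : 0 ≤ gradSq d F x :=
  Finset.sum_nonneg fun _ _ => sq_nonneg _

lemma F_shiftT {d n : ℕ} {F : (Fin d → ℝ) → ℝ} (hF : PerT d F) (x : Fin d → ℝ)
    (p : Fin d × Bool) : F (shiftT d n x p) = F (x + stepT d n p) := by
  rw [← hF (x + stepT d n p) (fun j => -⌊x j + stepT d n p j⌋)]
  congr 1
  ext j
  simp only [shiftT, Int.fract, Pi.add_apply]
  push_cast; ring

/-- The rates out of `x` in the two directions `± e_i` sum to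
`2 cosh (∂ᵢF(x) / 2) + O(1/n)`; after subtracting `2`, this is bounded below by a multiple of
`(∂ᵢF(x))²`, up to an explicit error of order `1/n`. -/
lemma site_lower {d n : ℕ} (hn : 3 ≤ n) {F : (Fin d → ℝ) → ℝ} (hF : PerT d F) {M : ℝ}
    (hM0 : 0 ≤ M)
    (hM : ∀ x : Fin d → ℝ, ‖x‖ ≤ 1 → ∀ w : Fin d → ℝ, ‖w‖ ≤ 1 →
      |F (x + w) - F x - fderiv ℝ F x w| ≤ M * ‖w‖ ^ 2)
    {x : Fin d → ℝ} (hx : x ∈ XiT d n) (i : Fin d) :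
    Real.exp (-M) * fderiv ℝ F x (Pi.single i 1) ^ 2 / 8 - (M + M ^ 2) / n ≤
      (Real.exp (-((n : ℝ) / 2) * (F (shiftT d n x (i, true)) - F x)) - 1) +
       (Real.exp (-((n : ℝ) / 2) * (F (shiftT d n x (i, false)) - F x)) - 1) := by
  have hn3 : (3 : ℝ) ≤ n := by exact_mod_cast hn
  have hn0 : (0 : ℝ) < n := by linarith
  have hx1 : ‖x‖ ≤ 1 := by
    rw [pi_norm_le_iff_of_nonneg zero_le_one]
    intro j
    obtain ⟨m, -, h0, h1⟩ := mem_XiT_coord hx j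
    rw [Real.norm_of_nonneg h0]; exact h1.le
  set u := fderiv ℝ F x (Pi.single i 1) with hu
  have main : ∀ b : Bool, |-((n : ℝ) / 2) * (F (shiftT d n x (i, b)) - F x) +
      (if b then 1 else -1) * (u / 2)| ≤ M / (2 * n) := by
    intro b
    rw [F_shiftT hF]
    have hst : stepT d n (i, b) =
        ((if b then (1 : ℝ) else -1) / n) • (Pi.single i 1 : Fin d → ℝ) := by
      rw [stepT, ← Pi.single_smul]; simp
    have hnorm : ‖stepT d n (i, b)‖ = 1 / n := by
      rw [hst, norm_smul, Pi.norm_single, norm_one, mul_one, norm_div]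
      cases b <;> simp
    have h := hM x hx1 (stepT d n (i, b)) (by
      rw [hnorm, div_le_one hn0]; linarith)
    rw [hnorm] at h
    have hd : fderiv ℝ F x (stepT d n (i, b)) = ((if b then (1 : ℝ) else -1) / n) * u := by
      rw [hst, map_smul, smul_eq_mul]
    rw [hd] at h
    have he : -((n : ℝ) / 2) * (F (x + stepT d n (i, b)) - F x) +
        (if b then 1 else -1) * (u / 2) = -((n : ℝ) / 2) *
        (F (x + stepT d n (i, b)) - F x - (if b then (1 : ℝ) else -1) / n * u) := by
      field_simp
      ring
    rw [he, abs_mul, abs_neg, abs_of_pos (by positivity : (0 : ℝ) < n / 2)]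
    calc (n : ℝ) / 2 * |F (x + stepT d n (i, b)) - F x - (if b then (1 : ℝ) else -1) / n * u|
        ≤ n / 2 * (M * (1 / n) ^ 2) := mul_le_mul_of_nonneg_left h (by positivity)
      _ = M / (2 * n) := by field_simp
  have hδ0 : 0 ≤ M / (2 * n) := by positivity
  have hplus : |-((n : ℝ) / 2) * (F (shiftT d n x (i, true)) - F x) + u / 2| ≤ M / (2 * n) := by
    have := main true
    rwa [if_pos rfl, one_mul] at this
  have hminus : |-((n : ℝ) / 2) * (F (shiftT d n x (i, false)) - F x) - u / 2| ≤
      M / (2 * n) := by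
    have := main false
    rwa [if_neg (by simp), neg_one_mul, ← sub_eq_add_neg] at this
  have key := exp_pair_lower hδ0 hplus hminus
  refine le_trans ?_ key
  have hδM : M / (2 * n) ≤ M := div_le_self hM0 (by linarith)
  have h1 : Real.exp (-M) * u ^ 2 ≤ Real.exp (-(M / (2 * n))) * u ^ 2 :=
    mul_le_mul_of_nonneg_right (Real.exp_le_exp.2 (by linarith)) (sq_nonneg _)
  have h2 : (M / (2 * n)) ^ 2 ≤ M ^ 2 / n := by
    rw [div_pow]
    exact div_le_div_of_nonneg_left (sq_nonneg _) hn0 (by nlinarith)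
  have h3 : 2 * (M / (2 * n)) = M / n := by field_simp
  rw [add_div]
  linarith

/-- The central estimate: `n ∑ μ |∇F|²` is controlled by `n ℐ_n(μ)`. -/
lemma scaled_gradSq_le {d n : ℕ} (hn : 3 ≤ n) {F : (Fin d → ℝ) → ℝ} (hF : PerT d F) {M : ℝ}
    (hM0 : 0 ≤ M)
    (hM : ∀ x : Fin d → ℝ, ‖x‖ ≤ 1 → ∀ w : Fin d → ℝ, ‖w‖ ≤ 1 →
      |F (x + w) - F x - fderiv ℝ F x w| ≤ M * ‖w‖ ^ 2)
    {μ : (Fin d → ℝ) → ℝ} (hμ : ∀ x ∈ XiT d n, 0 ≤ μ x) (hμ1 : ∑ x ∈ XiT d n, μ x = 1) :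
    n * ∑ x ∈ XiT d n, μ x * gradSq d F x ≤
      8 * Real.exp M * (n * IT d F n μ + d * (M + M ^ 2)) := by
  have hn0 : (0 : ℝ) < n := by exact_mod_cast (by omega : 0 < n)
  have h1 : ∑ x ∈ XiT d n, μ x * (Real.exp (-M) / 8 * gradSq d F x - d * ((M + M ^ 2) / n)) ≤
      IT d F n μ := by
    refine le_trans (Finset.sum_le_sum fun x hx => ?_) (IT_lower hn F hμ)
    refine mul_le_mul_of_nonneg_left ?_ (hμ x hx)
    refine le_trans (le_of_eq ?_) (Finset.sum_le_sum fun i _ => site_lower hn hF hM0 hM hx i)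
    rw [Finset.sum_sub_distrib, gradSq, Finset.mul_sum]
    simp only [Finset.sum_const, Finset.card_univ, Fintype.card_fin, nsmul_eq_mul]
    congr 1
    exact Finset.sum_congr rfl fun i _ => by ring
  have h2 : ∑ x ∈ XiT d n, μ x * (Real.exp (-M) / 8 * gradSq d F x - d * ((M + M ^ 2) / n)) =
      Real.exp (-M) / 8 * ∑ x ∈ XiT d n, μ x * gradSq d F x - d * ((M + M ^ 2) / n) := by
    simp only [mul_sub, Finset.sum_sub_distrib, ← Finset.sum_mul, hμ1, one_mul, Finset.mul_sum]
    congr 1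
    exact Finset.sum_congr rfl fun i _ => by ring
  rw [h2] at h1
  set S := ∑ x ∈ XiT d n, μ x * gradSq d F x
  have h3 : n * S = 8 * Real.exp M * (n * (Real.exp (-M) / 8 * S - d * ((M + M ^ 2) / n)) +
      d * (M + M ^ 2)) := by
    have : Real.exp M * Real.exp (-M) = 1 := by rw [← Real.exp_add]; simp
    field_simp
    linear_combination (-(n : ℝ) * S) * this
  rw [h3]
  have he : 0 ≤ 8 * Real.exp M := by positivity
  refine mul_le_mul_of_nonneg_left ?_ he
  have := mul_le_mul_of_nonneg_left h1 hn0.le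
  linarith

/-! ### Small cubes around the critical points -/

lemma fderiv_periodic {d : ℕ} {F : (Fin d → ℝ) → ℝ} (hF : PerT d F) (x : Fin d → ℝ)
    (v : Fin d → ℤ) : fderiv ℝ F (x + fun i => (v i : ℝ)) = fderiv ℝ F x := by
  rw [← fderiv_comp_add_right]
  congr 1
  ext y
  exact hF y v

lemma tdistT_nonneg {d : ℕ} (x z : Fin d → ℝ) : 0 ≤ tdistT d x z :=
  Real.iInf_nonneg fun _ => Real.sqrt_nonneg _

lemma tdistT_le {d : ℕ} (x z : Fin d → ℝ) (v : Fin d → ℤ) :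
    tdistT d x z ≤ d * ‖fun i => x i - z i - (v i : ℝ)‖ := by
  set w : Fin d → ℝ := fun i => x i - z i - (v i : ℝ) with hw
  have h1 : tdistT d x z ≤ Real.sqrt (∑ i, w i ^ 2) :=
    ciInf_le (f := fun v : Fin d → ℤ => Real.sqrt (∑ i, (x i - z i - (v i : ℝ)) ^ 2))
      ⟨0, by rintro _ ⟨v, rfl⟩; exact Real.sqrt_nonneg _⟩ v
  refine h1.trans (Real.sqrt_le_iff.2 ⟨by positivity, ?_⟩)
  have h2 : ∑ i, w i ^ 2 ≤ ∑ _i : Fin d, ‖w‖ ^ 2 := Finset.sum_le_sum fun i _ => by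
    rw [← sq_abs, ← Real.norm_eq_abs]
    exact pow_le_pow_left₀ (norm_nonneg _) (norm_le_pi_norm w i) 2
  refine h2.trans ?_
  rw [Finset.sum_const, Finset.card_univ, Fintype.card_fin, nsmul_eq_mul, mul_pow]
  refine mul_le_mul_of_nonneg_right ?_ (sq_nonneg _)
  exact_mod_cast Nat.le_self_pow two_ne_zero d

/-- Near a critical point, `|x - z|³ ≤ K ε |∇F(x)|²` on the cube of side `ε`: two powers of the
distance are absorbed by the gradient, the third one is at most a multiple of `ε`. -/
lemma cube_bound {d : ℕ} {F : (Fin d → ℝ) → ℝ} (hper : PerT d F) (hF : ContDiff ℝ 2 F)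
    {z : Fin d → ℝ} (hz : fderiv ℝ F z = 0) (hdet : (HessT d F z).det ≠ 0) :
    ∃ K : ℝ, 0 ≤ K ∧ ∀ᶠ ε : ℝ in nhdsWithin 0 (Set.Ioi 0), ∀ x, InCubeT d ε z x →
      tdistT d x z ^ 3 ≤ K * ε * gradSq d F x := by
  obtain ⟨C, hC0, r, hr, hC⟩ := gradient_lower hF hz hdet
  refine ⟨d ^ 3 * C ^ 2, by positivity, ?_⟩
  filter_upwards [Ioc_mem_nhdsGT hr] with ε hε x hx
  obtain ⟨hε0, hεr⟩ := hε
  obtain ⟨v, hv⟩ := hx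
  set w : Fin d → ℝ := fun i => x i - z i - (v i : ℝ) with hw
  have hwε : ‖w‖ ≤ ε :=
    (pi_norm_le_iff_of_nonneg hε0.le).2 fun i => (hv i).trans (by linarith)
  have hxe : x = (z + w) + fun i => (v i : ℝ) := by
    ext i; simp only [hw, Pi.add_apply]; ring
  have hfd : fderiv ℝ F (z + w) = fderiv ℝ F x := by
    rw [hxe, fderiv_periodic hper]
  have h1 := hC w (hwε.trans hεr)
  rw [hfd] at h1
  have hg : ‖fun i => fderiv ℝ F x (Pi.single i 1)‖ ≤ Real.sqrt (gradSq d F x) := by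
    refine (pi_norm_le_iff_of_nonneg (Real.sqrt_nonneg _)).2 fun i => ?_
    refine Real.abs_le_sqrt ?_
    exact Finset.single_le_sum (f := fun i => fderiv ℝ F x (Pi.single i 1) ^ 2)
      (fun _ _ => sq_nonneg _) (Finset.mem_univ i)
  have h2 : ‖w‖ ^ 2 ≤ C ^ 2 * gradSq d F x := by
    have h3 : ‖w‖ ≤ C * Real.sqrt (gradSq d F x) :=
      h1.trans (mul_le_mul_of_nonneg_left hg hC0)
    have h4 := pow_le_pow_left₀ (norm_nonneg w) h3 2
    rwa [mul_pow, Real.sq_sqrt (gradSq_nonneg F x)] at h4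
  calc tdistT d x z ^ 3 ≤ (d * ‖w‖) ^ 3 :=
        pow_le_pow_left₀ (tdistT_nonneg x z) (tdistT_le x z v) 3
    _ = d ^ 3 * (‖w‖ * ‖w‖ ^ 2) := by ring
    _ ≤ d ^ 3 * (ε * (C ^ 2 * gradSq d F x)) :=
        mul_le_mul_of_nonneg_left (mul_le_mul hwε h2 (sq_nonneg _) hε0.le) (by positivity)
    _ = d ^ 3 * C ^ 2 * ε * gradSq d F x := by ring

/-- If `limsup n·ℐ_n(μ_n) < ∞`, then
`lim_{ε→0⁺} limsup_n n·Σ_{z∈𝒫} Σ_{x∈Q^n_ε(z)} μ_n(x)|x-z|³ = 0`, with `|x-z|` the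
torus distance. -/
theorem stmt17 (d : ℕ) (F : (Fin d → ℝ) → ℝ)
    (hFper : PerT d F)
    (hFC2 : ContDiff ℝ 2 F)
    (hFLip : ∃ L : NNReal, LipschitzWith L (iteratedFDeriv ℝ 2 F))
    (P : Finset (Fin d → ℝ))
    (hP : ∀ z : Fin d → ℝ, z ∈ P ↔
      ((∀ i, z i ∈ Set.Ico (0 : ℝ) 1) ∧ fderiv ℝ F z = 0))
    (hnd : ∀ z : Fin d → ℝ, fderiv ℝ F z = 0 → (HessT d F z).det ≠ 0)
    (μn : ℕ → (Fin d → ℝ) → ℝ)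
    (hμn : ∀ n, 0 < n →
      (∀ x ∈ XiT d n, 0 ≤ μn n x) ∧ ∑ x ∈ XiT d n, μn n x = 1)
    (hbdd : Filter.IsBoundedUnder (· ≤ ·) atTop
      (fun n : ℕ => (n : ℝ) * IT d F n (μn n))) :
    Tendsto
      (fun ε : ℝ => limsup
        (fun n : ℕ => ENNReal.ofReal ((n : ℝ) *
          ∑ z ∈ P, ∑ x ∈ QT d ε z n, μn n x * tdistT d x z ^ 3)) atTop)
      (nhdsWithin 0 (Set.Ioi 0)) (nhds 0) := by
  obtain ⟨M, hM0, hM⟩ := exists_taylor_bound hFC2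
  obtain ⟨B, hB⟩ := hbdd
  rw [eventually_map] at hB
  have hcube : ∀ z ∈ P, ∃ K : ℝ, 0 ≤ K ∧ ∀ᶠ ε : ℝ in nhdsWithin 0 (Set.Ioi 0), ∀ x,
      InCubeT d ε z x → tdistT d x z ^ 3 ≤ K * ε * gradSq d F x := fun z hz =>
    cube_bound hFper hFC2 ((hP z).1 hz).2 (hnd z ((hP z).1 hz).2)
  choose! K hK0 hK using hcube
  set B' : ℝ := 8 * Real.exp M * (B + d * (M + M ^ 2)) with hB'
  -- the second moments of the gradient under `μn n` are `O(1/n)`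
  have hmom : ∀ᶠ n : ℕ in atTop, 3 ≤ n ∧
      n * ∑ x ∈ XiT d n, μn n x * gradSq d F x ≤ B' := by
    filter_upwards [hB, eventually_ge_atTop 3] with n hn hn3
    refine ⟨hn3, ?_⟩
    obtain ⟨h0, h1⟩ := hμn n (by omega)
    refine (scaled_gradSq_le hn3 hFper hM0 hM h0 h1).trans ?_
    refine mul_le_mul_of_nonneg_left ?_ (by positivity)
    linarith
  have hlim : Tendsto (fun ε : ℝ => ENNReal.ofReal (∑ z ∈ P, K z * ε * B'))
      (nhdsWithin 0 (Set.Ioi 0)) (nhds 0) := by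
    have hc : Continuous fun ε : ℝ => ENNReal.ofReal (∑ z ∈ P, K z * ε * B') :=
      ENNReal.continuous_ofReal.comp (by fun_prop)
    have := hc.tendsto 0
    simp only [mul_zero, zero_mul, Finset.sum_const_zero, ENNReal.ofReal_zero] at this
    exact this.mono_left nhdsWithin_le_nhds
  refine tendsto_of_tendsto_of_tendsto_of_le_of_le' tendsto_const_nhds hlim
    (Eventually.of_forall fun _ => zero_le) ?_
  have hKall : ∀ᶠ ε : ℝ in nhdsWithin 0 (Set.Ioi 0), ∀ z ∈ P, ∀ x,
      InCubeT d ε z x → tdistT d x z ^ 3 ≤ K z * ε * gradSq d F x :=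
    (eventually_all_finset P).2 hK
  filter_upwards [hKall, self_mem_nhdsWithin] with ε hε hε0
  have hε0 : 0 < ε := hε0
  refine limsup_le_of_le (h := ?_)
  filter_upwards [hmom] with n hn
  obtain ⟨hn3, hn⟩ := hn
  have hμ0 := (hμn n (by omega)).1
  refine ENNReal.ofReal_le_ofReal ?_
  rw [Finset.mul_sum]
  refine Finset.sum_le_sum fun z hz => ?_
  have hKε : 0 ≤ K z * ε := mul_nonneg (hK0 z hz) hε0.le
  have h1 : ∑ x ∈ QT d ε z n, μn n x * tdistT d x z ^ 3 ≤
      K z * ε * ∑ x ∈ XiT d n, μn n x * gradSq d F x := by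
    rw [Finset.mul_sum]
    refine le_trans (Finset.sum_le_sum (g := fun x => K z * ε * (μn n x * gradSq d F x))
      fun x hx => ?_) (Finset.sum_le_sum_of_subset_of_nonneg (Finset.filter_subset _ _)
        fun x hx _ => mul_nonneg hKε (mul_nonneg (hμ0 x hx) (gradSq_nonneg F x)))
    obtain ⟨hxX, hxQ⟩ := Finset.mem_filter.1 hx
    have := mul_le_mul_of_nonneg_left (hε z hz x hxQ) (hμ0 x hxX)
    linarith
  calc (n : ℝ) * ∑ x ∈ QT d ε z n, μn n x * tdistT d x z ^ 3
      ≤ n * (K z * ε * ∑ x ∈ XiT d n, μn n x * gradSq d F x) :=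
        mul_le_mul_of_nonneg_left h1 (Nat.cast_nonneg n)
    _ = K z * ε * (n * ∑ x ∈ XiT d n, μn n x * gradSq d F x) := by ring
    _ ≤ K z * ε * B' := mul_le_mul_of_nonneg_left hn hKε

end
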